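/- arXiv:1011.0791 — 2 statements merged into one kernel-verified Lean document; each statement's English description precedes it below -/
import Mathlib

section
/- Let m, b : [0,1] → ℝ be continuous with 0 < m_min ≤ m(x) ≤ m_max and 0 < b_min ≤ b(x) ≤ b_max for all x ∈ [0,1], let ρ, N > 0, and let λ ∈ ℝ be such that there exists a nonzero twice continuously differentiable φ : [0,1] → ℝ with φ''(x) + λ·(m(x)/b(x))·φ(x) = 0 on [0,1], φ'(0) = 0 and φ(1) = 0. If in addition λ < 4·ρ·N², then every complex root s of s² + (λ/N²)·s + (ρ·λ/N²) = 0 satisfies Re(s) = −λ/(2·N²) ≤ −π²·b_min/(8·m_max·N²). -/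
open Real Set

/-!
If `r' = r² + p`, then `(φ φ' + r φ²)' = (φ' + r φ)² + (p - q) φ²` along solutions of `φ'' = -q φ`.
Hence, when `q < p`, the function `φ φ' + r φ²` increases, and the boundary conditions
`φ'(a) = 0 = φ(b)` together with `0 ≤ r(a)` force it, and then `φ`, to vanish. The choice
`r(x) = ω tan (ω (x - a))` has `p = ω²` and is defined on all of `[a, b]` as long as
`ω (b - a) < π / 2`, so an eigenvalue `λ` with weight `0 ≤ w ≤ W` satisfies
`(π / (2 (b - a)))² ≤ λ W`. In particular `λ > 0`, so that `λ < 4 ρ N²` says that the quadratic in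
`s` has negative discriminant; its roots are then a conjugate pair with real part `-λ / (2 N²)`.
-/

/-- `φ`, with derivative `φ'`, solves `φ'' + q φ = 0` on `[a, b]` with the Neumann condition
`φ' a = 0` on the left and the Dirichlet condition `φ b = 0` on the right. Derivatives are taken
within `[a, b]`, hence are one-sided at the end points. -/
structure IsNeumannDirichletSolution (a b : ℝ) (q φ φ' : ℝ → ℝ) : Prop where
  hasDerivWithinAt : ∀ x ∈ Icc a b, HasDerivWithinAt φ (φ' x) (Icc a b) x
  hasDerivWithinAt_deriv : ∀ x ∈ Icc a b, HasDerivWithinAt φ' (-(q x * φ x)) (Icc a b) x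
  deriv_left : φ' a = 0
  right : φ b = 0

/-- `lam` is an eigenvalue of the Sturm–Liouville problem `φ'' + lam w φ = 0` on `[a, b]` with
weight `w` and boundary conditions `φ' a = 0`, `φ b = 0`: it has a solution that is not identically
zero on `[a, b]`. -/
def IsNeumannDirichletEigenvalue (a b : ℝ) (w : ℝ → ℝ) (lam : ℝ) : Prop :=
  ∃ φ φ' : ℝ → ℝ, IsNeumannDirichletSolution a b (fun x ↦ lam * w x) φ φ' ∧
    ∃ x ∈ Icc a b, φ x ≠ 0

theorem hasDerivWithinAt_mul_add_riccati_mul_sq {s : Set ℝ} {x p q : ℝ} {φ φ' r : ℝ → ℝ}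
    (hφ : HasDerivWithinAt φ (φ' x) s x) (hφ' : HasDerivWithinAt φ' (-(q * φ x)) s x)
    (hr : HasDerivWithinAt r (r x ^ 2 + p) s x) :
    HasDerivWithinAt (fun y ↦ φ y * φ' y + r y * φ y ^ 2)
      ((φ' x + r x * φ x) ^ 2 + (p - q) * φ x ^ 2) s x := by
  refine ((hφ.fun_mul hφ').fun_add (hr.fun_mul (hφ.fun_pow 2))).congr_deriv ?_
  push_cast
  ring

theorem hasDerivAt_mul_tan_mul_sub {ω a x : ℝ} (hcos : cos (ω * (x - a)) ≠ 0) :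
    HasDerivAt (fun y ↦ ω * tan (ω * (y - a))) ((ω * tan (ω * (x - a))) ^ 2 + ω ^ 2) x := by
  have hlin : HasDerivAt (fun y ↦ ω * (y - a)) ω x := by
    simpa using ((hasDerivAt_id x).sub_const a).const_mul ω
  refine (((hasDerivAt_tan hcos).comp x hlin).const_mul ω).congr_deriv ?_
  rw [← eq_one_div_of_mul_eq_one_left (one_add_tan_sq_mul_cos_sq_eq_one hcos)]
  ring

namespace IsNeumannDirichletSolution

variable {a b : ℝ} {q φ φ' : ℝ → ℝ}

theorem mul_add_riccati_mul_sq_eq_zero {p r : ℝ → ℝ} (hφ : IsNeumannDirichletSolution a b q φ φ')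
    (hr : ∀ x ∈ Icc a b, HasDerivWithinAt r (r x ^ 2 + p x) (Icc a b) x) (hra : 0 ≤ r a)
    (hqp : ∀ x ∈ Icc a b, q x ≤ p x) {x : ℝ} (hx : x ∈ Icc a b) :
    φ x * φ' x + r x * φ x ^ 2 = 0 := by
  have hderiv (y) (hy : y ∈ Icc a b) := hasDerivWithinAt_mul_add_riccati_mul_sq
    (hφ.hasDerivWithinAt y hy) (hφ.hasDerivWithinAt_deriv y hy) (hr y hy)
  have hmono : MonotoneOn (fun y ↦ φ y * φ' y + r y * φ y ^ 2) (Icc a b) := by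
    refine monotoneOn_of_hasDerivWithinAt_nonneg (convex_Icc a b)
      (fun y hy ↦ (hderiv y hy).continuousWithinAt)
      (fun y hy ↦ (hderiv y (interior_subset hy)).mono interior_subset) fun y hy ↦ ?_
    have : 0 ≤ p y - q y := sub_nonneg.2 (hqp y (interior_subset hy))
    positivity
  have hab : a ≤ b := hx.1.trans hx.2
  apply le_antisymm
  · simpa [hφ.right] using hmono hx (right_mem_Icc.2 hab) hx.2
  · calc 0 ≤ φ a * φ' a + r a * φ a ^ 2 := by
          simpa [hφ.deriv_left] using mul_nonneg hra (sq_nonneg (φ a))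
      _ ≤ φ x * φ' x + r x * φ x ^ 2 := hmono (left_mem_Icc.2 hab) hx hx.1

theorem eq_zero_of_lt_riccati {p r : ℝ → ℝ} (hφ : IsNeumannDirichletSolution a b q φ φ')
    (hab : a < b) (hr : ∀ x ∈ Icc a b, HasDerivWithinAt r (r x ^ 2 + p x) (Icc a b) x)
    (hra : 0 ≤ r a) (hqp : ∀ x ∈ Icc a b, q x < p x) {x : ℝ} (hx : x ∈ Icc a b) :
    φ x = 0 := by
  have hzero (y) (hy : y ∈ Icc a b) : φ y * φ' y + r y * φ y ^ 2 = 0 :=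
    hφ.mul_add_riccati_mul_sq_eq_zero hr hra (fun z hz ↦ (hqp z hz).le) hy
  have hderiv_zero : (φ' x + r x * φ x) ^ 2 + (p x - q x) * φ x ^ 2 = 0 :=
    (uniqueDiffOn_Icc hab x hx).eq_deriv _
      (hasDerivWithinAt_mul_add_riccati_mul_sq (hφ.hasDerivWithinAt x hx)
        (hφ.hasDerivWithinAt_deriv x hx) (hr x hx))
      ((hasDerivWithinAt_const x _ 0).congr hzero (hzero x hx))
  have hpos : 0 < p x - q x := sub_pos.2 (hqp x hx)
  have hmul : (p x - q x) * φ x ^ 2 = 0 :=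
    ((add_eq_zero_iff_of_nonneg (by positivity) (by positivity)).1 hderiv_zero).2
  simpa [hpos.ne'] using hmul

theorem eq_zero_of_lt_sq {ω : ℝ} (hφ : IsNeumannDirichletSolution a b q φ φ') (hab : a < b)
    (hω : 0 ≤ ω) (hωπ : ω * (b - a) < π / 2) (hq : ∀ x ∈ Icc a b, q x < ω ^ 2) {x : ℝ}
    (hx : x ∈ Icc a b) : φ x = 0 := by
  have hcos (y) (hy : y ∈ Icc a b) : 0 < cos (ω * (y - a)) := by
    have hlower : 0 ≤ ω * (y - a) := mul_nonneg hω (sub_nonneg.2 hy.1)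
    have hupper : ω * (y - a) ≤ ω * (b - a) := by gcongr; exact hy.2
    exact cos_pos_of_mem_Ioo ⟨by linarith [pi_pos], by linarith⟩
  exact hφ.eq_zero_of_lt_riccati (p := fun _ ↦ ω ^ 2) hab
    (fun y hy ↦ (hasDerivAt_mul_tan_mul_sub (hcos y hy).ne').hasDerivWithinAt) (by simp) hq hx

theorem eq_zero_of_le {K : ℝ} (hφ : IsNeumannDirichletSolution a b q φ φ') (hab : a < b)
    (hK : K < (π / (2 * (b - a))) ^ 2) (hq : ∀ x ∈ Icc a b, q x ≤ K) {x : ℝ}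
    (hx : x ∈ Icc a b) : φ x = 0 := by
  have hlen : 0 < b - a := sub_pos.2 hab
  obtain ⟨ω, hKω, hωπ⟩ := exists_between ((sqrt_lt' (by positivity)).2 hK)
  have hω : 0 < ω := (sqrt_nonneg K).trans_lt hKω
  refine hφ.eq_zero_of_lt_sq hab hω.le ?_ (fun y hy ↦ (hq y hy).trans_lt ((sqrt_lt' hω).1 hKω)) hx
  calc ω * (b - a) < π / (2 * (b - a)) * (b - a) := by gcongr
    _ = π / 2 := by field_simp

end IsNeumannDirichletSolution

namespace IsNeumannDirichletEigenvalue

variable {a b lam W : ℝ} {w : ℝ → ℝ}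

theorem sq_pi_div_le_mul (hlam : IsNeumannDirichletEigenvalue a b w lam) (hab : a < b)
    (hw : ∀ x ∈ Icc a b, 0 ≤ w x ∧ w x ≤ W) : (π / (2 * (b - a))) ^ 2 ≤ lam * W := by
  obtain ⟨φ, φ', hφ, x, hx, hne⟩ := hlam
  by_contra! hlt
  have : 0 < b - a := sub_pos.2 hab
  refine hne (hφ.eq_zero_of_le (K := max (lam * W) 0) hab (max_lt hlt (by positivity)) ?_ hx)
  intro y hy
  obtain ⟨hwy, hwW⟩ := hw y hy
  rcases le_total lam 0 with hneg | hnonneg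
  · exact le_max_of_le_right (mul_nonpos_of_nonpos_of_nonneg hneg hwy)
  · exact le_max_of_le_left (by gcongr)

theorem pos (hlam : IsNeumannDirichletEigenvalue a b w lam) (hab : a < b)
    (hw : ∀ x ∈ Icc a b, 0 ≤ w x ∧ w x ≤ W) : 0 < lam := by
  have : 0 < b - a := sub_pos.2 hab
  have hmul : 0 < lam * W := lt_of_lt_of_le (by positivity) (hlam.sq_pi_div_le_mul hab hw)
  obtain ⟨hwa, hwW⟩ := hw a (left_mem_Icc.2 hab.le)
  exact pos_of_mul_pos_left hmul (hwa.trans hwW)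

end IsNeumannDirichletEigenvalue

theorem re_eq_of_quadratic_eq_zero_of_discrim_neg {a b c : ℝ} (hdiscrim : discrim a b c < 0)
    {z : ℂ} (hz : a * z ^ 2 + b * z + c = 0) : z.re = -b / (2 * a) := by
  have ha : a ≠ 0 := by
    rintro rfl
    simp only [discrim] at hdiscrim
    nlinarith
  have hre : a * (z.re * z.re - z.im * z.im) + b * z.re + c = 0 := by
    simpa [pow_two] using congrArg Complex.re hz
  have him : a * (z.re * z.im + z.im * z.re) + b * z.im = 0 := by
    simpa [pow_two] using congrArg Complex.im hz
  have him_ne : z.im ≠ 0 := by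
    intro hreal
    have hroot : a * (z.re * z.re) + b * z.re + c = 0 := by simpa [hreal] using hre
    exact hdiscrim.not_ge (discrim_eq_sq_of_quadratic_eq_zero hroot ▸ sq_nonneg _)
  have hsum : 2 * a * z.re + b = 0 := mul_left_cancel₀ him_ne (by linear_combination him)
  rw [eq_div_iff (by positivity)]
  linear_combination hsum

theorem re_eq_of_temporal_characteristic_eq_zero {lam ρ N : ℝ} (hlam : 0 < lam)
    (hdisc : lam < 4 * ρ * N ^ 2) {s : ℂ}
    (hs : s ^ 2 + ((lam / N ^ 2 : ℝ) : ℂ) * s + ((ρ * lam / N ^ 2 : ℝ) : ℂ) = 0) :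
    s.re = -lam / (2 * N ^ 2) := by
  have hN : N ≠ 0 := by
    rintro rfl
    linarith
  have hdiscrim : discrim 1 (lam / N ^ 2) (ρ * lam / N ^ 2) < 0 := by
    have hfactor : discrim 1 (lam / N ^ 2) (ρ * lam / N ^ 2) =
        lam * (lam - 4 * ρ * N ^ 2) / N ^ 4 := by
      rw [discrim]
      field_simp
    rw [hfactor]
    exact div_neg_of_neg_of_pos (mul_neg_of_pos_of_neg hlam (sub_neg.2 hdisc)) (by positivity)
  rw [re_eq_of_quadratic_eq_zero_of_discrim_neg hdiscrim (by simpa using hs)]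
  field_simp

theorem stmt_10_general {m b : ℝ → ℝ} {mmax bmin ρ N lam : ℝ} (hbmin : 0 < bmin)
    (hm : ∀ x ∈ Icc (0 : ℝ) 1, 0 ≤ m x ∧ m x ≤ mmax) (hb : ∀ x ∈ Icc (0 : ℝ) 1, bmin ≤ b x)
    (hlam : IsNeumannDirichletEigenvalue 0 1 (fun x ↦ m x / b x) lam)
    (hdisc : lam < 4 * ρ * N ^ 2) {s : ℂ}
    (hs : s ^ 2 + ((lam / N ^ 2 : ℝ) : ℂ) * s + ((ρ * lam / N ^ 2 : ℝ) : ℂ) = 0) :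
    s.re = -lam / (2 * N ^ 2) ∧ s.re ≤ -(π ^ 2 * bmin / (8 * mmax * N ^ 2)) := by
  have hw : ∀ x ∈ Icc (0 : ℝ) 1, 0 ≤ m x / b x ∧ m x / b x ≤ mmax / bmin := by
    intro x hx
    obtain ⟨hm0, hmmax⟩ := hm x hx
    exact ⟨div_nonneg hm0 (hbmin.le.trans (hb x hx)),
      div_le_div₀ (hm0.trans hmmax) hmmax hbmin (hb x hx)⟩
  have hpos : 0 < lam := hlam.pos zero_lt_one hw
  have hbound : (π / 2) ^ 2 ≤ lam * (mmax / bmin) := by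
    simpa using hlam.sq_pi_div_le_mul zero_lt_one hw
  have hratio : 0 < mmax / bmin :=
    pos_of_mul_pos_right (lt_of_lt_of_le (by positivity) hbound) hpos.le
  have hmmax : 0 < mmax := (div_pos_iff_of_pos_right hbmin).1 hratio
  have hlower : π ^ 2 * bmin / (4 * mmax) ≤ lam := by
    rw [← mul_div_assoc, le_div_iff₀ hbmin] at hbound
    rw [div_le_iff₀ (by positivity)]
    linarith
  have hre : s.re = -lam / (2 * N ^ 2) := re_eq_of_temporal_characteristic_eq_zero hpos hdisc hs
  refine ⟨hre, ?_⟩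
  calc s.re = -(lam / (2 * N ^ 2)) := by rw [hre, neg_div]
    _ ≤ -(π ^ 2 * bmin / (4 * mmax) / (2 * N ^ 2)) := by gcongr
    _ = -(π ^ 2 * bmin / (8 * mmax * N ^ 2)) := by rw [div_div]; ring_nf

/-- Stability margin for the heterogeneous symmetric platoon (Lemma 2): if `λ` is an
eigenvalue of `φ'' + λ(m/b)φ = 0`, `φ'(0) = 0`, `φ(1) = 0` and `λ < 4ρN²`, then every
complex root of `s² + (λ/N²)s + (ρλ/N²) = 0` has real part
`-λ/(2N²) ≤ -π² b_min/(8 m_max N²)`. -/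
theorem stmt_10 (m b : ℝ → ℝ) (mmin mmax bmin bmax ρ N : ℝ)
    (hmc : ContinuousOn m (Icc (0:ℝ) 1)) (hbc : ContinuousOn b (Icc (0:ℝ) 1))
    (hmmin : 0 < mmin) (hbmin : 0 < bmin) (hρ : 0 < ρ) (hN : 0 < N)
    (hmb : ∀ x ∈ Icc (0:ℝ) 1, mmin ≤ m x ∧ m x ≤ mmax)
    (hbb : ∀ x ∈ Icc (0:ℝ) 1, bmin ≤ b x ∧ b x ≤ bmax)
    (lam : ℝ)
    (hex : ∃ φ φ' φ'' : ℝ → ℝ,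
      (∀ x ∈ Icc (0:ℝ) 1, HasDerivWithinAt φ (φ' x) (Icc (0:ℝ) 1) x) ∧
      (∀ x ∈ Icc (0:ℝ) 1, HasDerivWithinAt φ' (φ'' x) (Icc (0:ℝ) 1) x) ∧
      ContinuousOn φ'' (Icc (0:ℝ) 1) ∧
      (∃ x ∈ Icc (0:ℝ) 1, φ x ≠ 0) ∧
      (∀ x ∈ Icc (0:ℝ) 1, φ'' x + lam * (m x / b x) * φ x = 0) ∧
      φ' 0 = 0 ∧ φ 1 = 0)
    (hdisc : lam < 4 * ρ * N ^ 2) :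
    ∀ s : ℂ, s ^ 2 + ((lam / N ^ 2 : ℝ) : ℂ) * s + ((ρ * lam / N ^ 2 : ℝ) : ℂ) = 0 →
      s.re = -lam / (2 * N ^ 2) ∧ s.re ≤ -(π ^ 2 * bmin / (8 * mmax * N ^ 2)) := by
  obtain ⟨φ, φ', φ'', hφ, hφ', -, hne, heq, hφ0, hφ1⟩ := hex
  exact fun _ ↦ stmt_10_general hbmin (fun x hx ↦ ⟨hmmin.le.trans (hmb x hx).1, (hmb x hx).2⟩)
    (fun x hx ↦ (hbb x hx).1) ⟨φ, φ', ⟨hφ, fun x hx ↦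
      (hφ' x hx).congr_deriv (eq_neg_of_add_eq_zero_left (heq x hx)), hφ0, hφ1⟩, hne⟩ hdisc
end

section
/- Let k₀, b₀, N > 0 and ε ∈ (0,1), and let λ ∈ ℝ be such that there exists a nonzero twice continuously differentiable φ : [0,1] → ℝ satisfying φ''(x) + 2·ε·N·φ'(x) + λ·N²·φ(x) = 0 for all x ∈ [0,1], φ'(0) = 0 and φ(1) = 0. Then every complex root s of s² + b₀·λ·s + k₀·λ = 0 satisfies Re(s) ≤ −min( b₀·ε²/2, k₀/b₀ ). -/
open Real Set

/-!
The substitution `ψ x = exp (ε N x) * φ x` removes the first-order term: `ψ'' = (ε² - λ) N² ψ`.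
If `λ ≤ ε²`, then `(ψ ψ')' = ψ'² + ψ ψ'' ≥ 0`, while `ψ ψ' ≥ 0` at the left endpoint because of the
Neumann condition on `φ`. Hence `(ψ²)' = 2 ψ ψ' ≥ 0`, and `ψ²`, being nonnegative, nondecreasing and
zero at the right endpoint, vanishes identically. So an eigenfunction forces `ε² < λ`. A nonreal
root of `s² + b₀ λ s + k₀ λ` has real part `-b₀ λ / 2`, and for a real root
`λ (b₀ s + k₀) = -s² ≤ 0` gives `s ≤ -k₀ / b₀`.
-/

section Monotonicity

variable {f f' f'' : ℝ → ℝ} {s : Set ℝ} {a b : ℝ}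

theorem monotoneOn_of_forall_hasDerivWithinAt_nonneg (hs : Convex ℝ s)
    (hf : ∀ x ∈ s, HasDerivWithinAt f (f' x) s x) (hf' : ∀ x ∈ s, 0 ≤ f' x) :
    MonotoneOn f s :=
  monotoneOn_of_hasDerivWithinAt_nonneg hs (fun x hx ↦ (hf x hx).continuousWithinAt)
    (fun x hx ↦ (hf x (interior_subset hx)).mono interior_subset)
    (fun x hx ↦ hf' x (interior_subset hx))

theorem monotoneOn_mul_deriv (hs : Convex ℝ s)
    (hf : ∀ x ∈ s, HasDerivWithinAt f (f' x) s x)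
    (hf' : ∀ x ∈ s, HasDerivWithinAt f' (f'' x) s x)
    (hff'' : ∀ x ∈ s, 0 ≤ f x * f'' x) :
    MonotoneOn (f * f') s :=
  monotoneOn_of_forall_hasDerivWithinAt_nonneg hs (fun x hx ↦ (hf x hx).mul (hf' x hx))
    (fun x hx ↦ add_nonneg (mul_self_nonneg (f' x)) (hff'' x hx))

theorem monotoneOn_sq_of_mul_deriv_nonneg (hs : Convex ℝ s)
    (hf : ∀ x ∈ s, HasDerivWithinAt f (f' x) s x) (hff' : ∀ x ∈ s, 0 ≤ f x * f' x) :
    MonotoneOn (f ^ 2) s := by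
  refine monotoneOn_of_forall_hasDerivWithinAt_nonneg hs (fun x hx ↦ (hf x hx).pow 2) ?_
  intro x hx
  simpa [mul_assoc] using hff' x hx

theorem eqOn_zero_of_mul_second_deriv_nonneg
    (hf : ∀ x ∈ Icc a b, HasDerivWithinAt f (f' x) (Icc a b) x)
    (hf' : ∀ x ∈ Icc a b, HasDerivWithinAt f' (f'' x) (Icc a b) x)
    (hff'' : ∀ x ∈ Icc a b, 0 ≤ f x * f'' x) (ha : 0 ≤ f a * f' a) (hb : f b = 0) :
    EqOn f 0 (Icc a b) := by
  intro x hx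
  have hab : a ≤ b := hx.1.trans hx.2
  have hff' : ∀ y ∈ Icc a b, 0 ≤ f y * f' y := fun y hy ↦
    ha.trans (monotoneOn_mul_deriv (convex_Icc a b) hf hf' hff'' (left_mem_Icc.2 hab) hy hy.1)
  have hsq : f x ^ 2 ≤ f b ^ 2 :=
    monotoneOn_sq_of_mul_deriv_nonneg (convex_Icc a b) hf hff' hx (right_mem_Icc.2 hab) hx.2
  rw [hb, zero_pow two_ne_zero] at hsq
  exact pow_eq_zero_iff two_ne_zero |>.1 (hsq.antisymm (sq_nonneg (f x)))

end Monotonicity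

section DampedEquation

theorem hasDerivWithinAt_exp_mul_mul {f : ℝ → ℝ} {f' x : ℝ} {s : Set ℝ} (c : ℝ)
    (hf : HasDerivWithinAt f f' s x) :
    HasDerivWithinAt (fun y ↦ exp (c * y) * f y) (exp (c * x) * (f' + c * f x)) s x := by
  have hexp : HasDerivAt (fun y ↦ exp (c * y)) (exp (c * x) * c) x := by
    simpa using ((hasDerivAt_id x).const_mul c).exp
  exact (hexp.hasDerivWithinAt.mul hf).congr_deriv (by ring)

variable {φ φ' φ'' : ℝ → ℝ} {a b c : ℝ}

theorem eqOn_zero_of_damped_equation {d : ℝ → ℝ}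
    (hφ : ∀ x ∈ Icc a b, HasDerivWithinAt φ (φ' x) (Icc a b) x)
    (hφ' : ∀ x ∈ Icc a b, HasDerivWithinAt φ' (φ'' x) (Icc a b) x)
    (hode : ∀ x ∈ Icc a b, φ'' x + 2 * c * φ' x + d x * φ x = 0)
    (hd : ∀ x ∈ Icc a b, d x ≤ c ^ 2)
    (ha : 0 ≤ φ a * (φ' a + c * φ a)) (hb : φ b = 0) :
    EqOn φ 0 (Icc a b) := by
  let ψ : ℝ → ℝ := fun x ↦ exp (c * x) * φ x
  let ψ' : ℝ → ℝ := fun x ↦ exp (c * x) * (φ' x + c * φ x)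
  let ψ'' : ℝ → ℝ := fun x ↦ exp (c * x) * (φ'' x + c * φ' x + c * (φ' x + c * φ x))
  have hψ : ∀ x ∈ Icc a b, HasDerivWithinAt ψ (ψ' x) (Icc a b) x := fun x hx ↦
    hasDerivWithinAt_exp_mul_mul c (hφ x hx)
  have hψ' : ∀ x ∈ Icc a b, HasDerivWithinAt ψ' (ψ'' x) (Icc a b) x := fun x hx ↦
    hasDerivWithinAt_exp_mul_mul c ((hφ' x hx).add ((hφ x hx).const_mul c))
  have hψ_ode : ∀ x ∈ Icc a b, ψ'' x = (c ^ 2 - d x) * ψ x := fun x hx ↦ by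
    linear_combination exp (c * x) * hode x hx
  have hψψ'' : ∀ x ∈ Icc a b, 0 ≤ ψ x * ψ'' x := fun x hx ↦ by
    rw [hψ_ode x hx, mul_left_comm]
    exact mul_nonneg (sub_nonneg.2 (hd x hx)) (mul_self_nonneg (ψ x))
  have hψa : 0 ≤ ψ a * ψ' a := by
    rw [mul_mul_mul_comm]
    exact mul_nonneg (mul_self_nonneg _) ha
  have hψb : ψ b = 0 := by simp only [ψ, hb, mul_zero]
  intro x hx
  have hψx : ψ x = 0 := eqOn_zero_of_mul_second_deriv_nonneg hψ hψ' hψψ'' hψa hψb hx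
  exact (mul_eq_zero.1 hψx).resolve_left (exp_ne_zero _)

theorem sq_lt_of_damped_eigenfunction {d : ℝ}
    (hφ : ∀ x ∈ Icc a b, HasDerivWithinAt φ (φ' x) (Icc a b) x)
    (hφ' : ∀ x ∈ Icc a b, HasDerivWithinAt φ' (φ'' x) (Icc a b) x)
    (hne : ∃ x ∈ Icc a b, φ x ≠ 0)
    (hode : ∀ x ∈ Icc a b, φ'' x + 2 * c * φ' x + d * φ x = 0)
    (ha : 0 ≤ φ a * (φ' a + c * φ a)) (hb : φ b = 0) :
    c ^ 2 < d := by
  by_contra! hd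
  obtain ⟨x, hx, hφx⟩ := hne
  exact hφx (eqOn_zero_of_damped_equation hφ hφ' hode (fun _ _ ↦ hd) ha hb hx)

end DampedEquation

section QuadraticRoots

variable {s : ℂ}

theorem im_eq_zero_or_re_eq_of_quadratic_eq_zero {p q : ℝ}
    (hs : s ^ 2 + (p : ℂ) * s + (q : ℂ) = 0) : s.im = 0 ∨ s.re = -(p / 2) := by
  have him : s.im * (2 * s.re + p) = 0 := by
    have := congrArg Complex.im hs
    simp only [pow_two, Complex.add_im, Complex.mul_im, Complex.ofReal_re, Complex.ofReal_im,
      Complex.zero_im] at this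
    linarith
  exact (mul_eq_zero.1 him).imp_right fun h ↦ by linarith

theorem le_neg_div_of_quadratic_eq_zero {k b lam x : ℝ} (hb : 0 < b) (hlam : 0 < lam)
    (hx : x ^ 2 + b * lam * x + k * lam = 0) : x ≤ -(k / b) := by
  have hprod : lam * (b * x + k) ≤ 0 := by linarith [sq_nonneg x]
  have hlin : b * x + k ≤ 0 := nonpos_of_mul_nonpos_right hprod hlam
  rw [← neg_div, le_div_iff₀ hb]
  linarith

theorem re_le_neg_min_of_quadratic_eq_zero {k b lam : ℝ} (hb : 0 < b) (hlam : 0 < lam)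
    (hs : s ^ 2 + ((b * lam : ℝ) : ℂ) * s + ((k * lam : ℝ) : ℂ) = 0) :
    s.re ≤ -min (b * lam / 2) (k / b) := by
  rcases im_eq_zero_or_re_eq_of_quadratic_eq_zero hs with him | hre
  · obtain ⟨x, rfl⟩ : ∃ x : ℝ, (x : ℂ) = s := ⟨s.re, Complex.ext rfl him.symm⟩
    have hx : x ^ 2 + b * lam * x + k * lam = 0 := by exact_mod_cast hs
    exact (le_neg_div_of_quadratic_eq_zero hb hlam hx).trans (neg_le_neg (min_le_right _ _))
  · exact hre.trans_le (neg_le_neg (min_le_left _ _))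

end QuadraticRoots

theorem stmt_15_general {k₀ b₀ N ε lam a b : ℝ} (hb₀ : 0 < b₀) {φ φ' φ'' : ℝ → ℝ}
    (hφ : ∀ x ∈ Icc a b, HasDerivWithinAt φ (φ' x) (Icc a b) x)
    (hφ' : ∀ x ∈ Icc a b, HasDerivWithinAt φ' (φ'' x) (Icc a b) x)
    (hne : ∃ x ∈ Icc a b, φ x ≠ 0)
    (hode : ∀ x ∈ Icc a b, φ'' x + 2 * ε * N * φ' x + lam * N ^ 2 * φ x = 0)
    (ha : 0 ≤ φ a * (φ' a + ε * N * φ a)) (hb : φ b = 0)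
    {s : ℂ} (hs : s ^ 2 + ((b₀ * lam : ℝ) : ℂ) * s + ((k₀ * lam : ℝ) : ℂ) = 0) :
    s.re ≤ -min (b₀ * ε ^ 2 / 2) (k₀ / b₀) := by
  have hscaled : (ε * N) ^ 2 < lam * N ^ 2 :=
    sq_lt_of_damped_eigenfunction hφ hφ' hne (by simpa only [mul_assoc] using hode) ha hb
  have hlam : ε ^ 2 < lam := lt_of_mul_lt_mul_right (mul_pow ε N 2 ▸ hscaled) (sq_nonneg N)
  calc s.re ≤ -min (b₀ * lam / 2) (k₀ / b₀) :=
        re_le_neg_min_of_quadratic_eq_zero hb₀ ((sq_nonneg ε).trans_lt hlam) hs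
    _ ≤ -min (b₀ * ε ^ 2 / 2) (k₀ / b₀) := by gcongr

/-- Theorem 3 of the paper: if `λ` is an eigenvalue of the boundary value problem
`φ'' + 2εN φ' + λN² φ = 0`, `φ'(0) = 0`, `φ(1) = 0`, then every complex root of
`s² + b₀λs + k₀λ = 0` satisfies `Re(s) ≤ -min(b₀ε²/2, k₀/b₀)`. -/
theorem stmt_15 (k₀ b₀ N ε : ℝ) (hk : 0 < k₀) (hb : 0 < b₀) (hN : 0 < N)
    (hε : ε ∈ Set.Ioo (0:ℝ) 1) (lam : ℝ)
    (hex : ∃ φ φ' φ'' : ℝ → ℝ,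
      (∀ x ∈ Icc (0:ℝ) 1, HasDerivWithinAt φ (φ' x) (Icc (0:ℝ) 1) x) ∧
      (∀ x ∈ Icc (0:ℝ) 1, HasDerivWithinAt φ' (φ'' x) (Icc (0:ℝ) 1) x) ∧
      ContinuousOn φ'' (Icc (0:ℝ) 1) ∧
      (∃ x ∈ Icc (0:ℝ) 1, φ x ≠ 0) ∧
      (∀ x ∈ Icc (0:ℝ) 1, φ'' x + 2 * ε * N * φ' x + lam * N ^ 2 * φ x = 0) ∧
      φ' 0 = 0 ∧ φ 1 = 0) :
    ∀ s : ℂ, s ^ 2 + ((b₀ * lam : ℝ) : ℂ) * s + ((k₀ * lam : ℝ) : ℂ) = 0 →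
      s.re ≤ -min (b₀ * ε ^ 2 / 2) (k₀ / b₀) := by
  obtain ⟨φ, φ', φ'', hφ, hφ', -, hne, hode, hneumann, hdirichlet⟩ := hex
  have hrobin : 0 ≤ φ 0 * (φ' 0 + ε * N * φ 0) := by
    rw [hneumann, zero_add, mul_left_comm]
    exact mul_nonneg (mul_pos hε.1 hN).le (mul_self_nonneg (φ 0))
  exact fun s hs ↦ stmt_15_general hb hφ hφ' hne hode hrobin hdirichlet hs
end
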